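/- Let n be a positive integer, let E and I be finite sets, let d : E -> R^n be a family of vectors, and let c : I -> (E -> R) be a linearly independent family spanning a linear subspace H of R^E. Suppose that for every epsilon in I and every index i in {1, ..., n} there exist an element e of E and a nonzero real number lambda such that d(e) = lambda * u_i (where u_i denotes the i-th standard basis vector of R^n), c(epsilon)(e) is nonzero, and c(epsilon')(e) = 0 for every epsilon' in I different from epsilon. Then the linear map Phi : R^E -> Hom_R(H, R^n) defined by Phi(l)(h) = sum over e in E of l_e * h_e * d(e) is surjective. -/

import Mathlib

/-!
A length supported on an edge `e` private to the cycle `c ε` changes only the value of `Φ` at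
`c ε`, and moves it along `d e`. If the private edges of each cycle have directions spanning the
target, the values at the cycles `c ε` can therefore be prescribed independently, and a linear map
on their span is determined by these values.
-/

open Submodule

section Abundancy

variable {K E I V : Type*} [CommSemiring K] [AddCommMonoid V] [Module K V]

/-- The edges on which `c ε` is the only member of the family `c` with a nonzero coefficient.
The coefficient is required to be a unit, which over a field only says that it is nonzero. -/
def privateEdges (c : I → E → K) (ε : I) : Set E :=
  {e | IsUnit (c ε e) ∧ ∀ ε' ≠ ε, c ε' e = 0}

variable [Fintype E]

/-- The bilinear map `(l, h) ↦ ∑ e, (l e * h e) • d e` pairing edge lengths `l` with chains `h` on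
a graph whose edge `e` has direction `d e`. -/
def displacement (d : E → V) : (E → K) →ₗ[K] (E → K) →ₗ[K] V :=
  (LinearMap.mul K (E → K)).compr₂ (Fintype.linearCombination K d)

theorem displacement_apply (d : E → V) (l h : E → K) :
    displacement d l h = ∑ e, (l e * h e) • d e := by
  simp only [displacement, LinearMap.compr₂_apply, LinearMap.mul_apply',
    Fintype.linearCombination_apply, Pi.mul_apply]

theorem displacement_single [DecidableEq E] (d : E → V) (e : E) (r : K) (h : E → K) :
    displacement d (Pi.single e r) h = (r * h e) • d e := by
  rw [displacement_apply, Fintype.sum_eq_single e, Pi.single_eq_same]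
  intro e' he'
  rw [Pi.single_eq_of_ne he', zero_mul, zero_smul]

/-- The abundancy map `Φ` of a space `H` of cycles: edge lengths `l` are sent to the linear map
giving the total displacement along each cycle. -/
def abundancyMap (H : Submodule K (E → K)) (d : E → V) : (E → K) →ₗ[K] H →ₗ[K] V :=
  (displacement d).domRestrict₂ H

theorem abundancyMap_apply (H : Submodule K (E → K)) (d : E → V) (l : E → K) (h : H) :
    abundancyMap H d l h = ∑ e, (l e * (h : E → K) e) • d e :=
  displacement_apply d l h

/-- The displacements along all members of a family `c` of chains, as a linear function of the
edge lengths. -/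
def displacements (d : E → V) (c : I → E → K) : (E → K) →ₗ[K] I → V :=
  LinearMap.pi fun ε => (displacement d).flip (c ε)

theorem displacements_apply (d : E → V) (c : I → E → K) (l : E → K) (ε : I) :
    displacements d c l ε = displacement d l (c ε) :=
  rfl

theorem single_direction_mem_range_displacements [DecidableEq I] (d : E → V) {c : I → E → K}
    {ε : I} {e : E} (he : e ∈ privateEdges c ε) :
    Pi.single ε (d e) ∈ LinearMap.range (displacements d c) := by
  classical
  obtain ⟨⟨u, hu⟩, hzero⟩ := he
  refine ⟨Pi.single e (↑u⁻¹ : K), ?_⟩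
  ext ε'
  rw [displacements_apply, displacement_single]
  obtain rfl | hne := eq_or_ne ε' ε
  · rw [← hu, Units.inv_mul, one_smul, Pi.single_eq_same]
  · rw [hzero ε' hne, mul_zero, zero_smul, Pi.single_eq_of_ne hne]

theorem displacements_surjective [Finite I] {d : E → V} {c : I → E → K}
    (hspan : ∀ ε, span K (d '' privateEdges c ε) = ⊤) :
    Function.Surjective (displacements d c) := by
  classical
  rw [← LinearMap.range_eq_top, eq_top_iff, ← LinearMap.iSup_range_single K fun _ : I => V]
  refine iSup_le fun ε => ?_
  rw [LinearMap.range_eq_map, ← hspan ε, map_span_le]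
  rintro _ ⟨e, he, rfl⟩
  exact single_direction_mem_range_displacements d he

theorem abundancy_map_surjective_general [Finite I] {d : E → V} {c : I → E → K}
    (hspan : ∀ ε, span K (d '' privateEdges c ε) = ⊤) :
    Function.Surjective (abundancyMap (span K (Set.range c)) d) := by
  intro φ
  obtain ⟨l, hl⟩ := displacements_surjective hspan
    fun ε => φ ⟨c ε, subset_span (Set.mem_range_self ε)⟩
  refine ⟨l, LinearMap.ext_on span_span_coe_preimage ?_⟩
  rintro ⟨_, _⟩ ⟨ε, rfl⟩
  exact congrFun hl ε

end Abundancy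

theorem span_eq_top_of_forall_smul_single_mem {K ι : Type*} [DivisionRing K] [Finite ι]
    [DecidableEq ι] {s : Set (ι → K)}
    (hs : ∀ i, ∃ a : K, a ≠ 0 ∧ a • (Pi.single i 1 : ι → K) ∈ s) :
    span K s = ⊤ := by
  rw [eq_top_iff, ← (Pi.basisFun K ι).span_eq, span_le]
  rintro _ ⟨i, rfl⟩
  obtain ⟨a, ha, hmem⟩ := hs i
  rw [Pi.basisFun_apply]
  exact (smul_mem_iff _ ha).mp (subset_span hmem)

theorem span_image_privateEdges_eq_top {K E I ι : Type*} [Field K] [Finite ι] [DecidableEq ι]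
    {d : E → ι → K} {c : I → E → K} {ε : I}
    (h : ∀ i, ∃ (e : E) (a : K), a ≠ 0 ∧ d e = a • (Pi.single i 1 : ι → K) ∧
      c ε e ≠ 0 ∧ ∀ ε' ≠ ε, c ε' e = 0) :
    span K (d '' privateEdges c ε) = ⊤ := by
  refine span_eq_top_of_forall_smul_single_mem fun i => ?_
  obtain ⟨e, a, ha, hd, hne, hzero⟩ := h i
  exact ⟨a, ha, e, ⟨hne.isUnit, hzero⟩, hd⟩

/-- Linear-algebra criterion for surjectivity of the abundancy map.  Let `d : E → ℝ^n`
be a family of vectors and `c : I → ℝ^E` a linearly independent family spanning a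
subspace `H` of `ℝ^E`.  Suppose for every `ε ∈ I` and every coordinate direction
`i ∈ {1, …, n}` there are `e ∈ E` and `λ ≠ 0` with `d e = λ • uᵢ`, `c ε e ≠ 0`, and
`c ε' e = 0` for all `ε' ≠ ε`.  Then the linear map
`Φ : ℝ^E → Hom(H, ℝ^n)`, `Φ(l)(h) = ∑ₑ lₑ hₑ d(e)`, is surjective:
every linear map `H → ℝ^n` is of the form `Φ(l)`. -/
theorem abundancy_map_surjective
    (n : ℕ) (hn : 0 < n) (E I : Type) [Fintype E] [Fintype I]
    (d : E → (Fin n → ℝ)) (c : I → (E → ℝ))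
    (hc : LinearIndependent ℝ c)
    (hyp : ∀ (ε : I) (i : Fin n), ∃ (e : E) (lam : ℝ), lam ≠ 0 ∧
        d e = lam • (Pi.single i 1 : Fin n → ℝ) ∧
        c ε e ≠ 0 ∧ ∀ ε' : I, ε' ≠ ε → c ε' e = 0) :
    ∀ φ : (Submodule.span ℝ (Set.range c)) →ₗ[ℝ] (Fin n → ℝ),
      ∃ l : E → ℝ, ∀ h : Submodule.span ℝ (Set.range c),
        φ h = ∑ e : E, (l e * (h : E → ℝ) e) • d e := by
  intro φ
  obtain ⟨l, rfl⟩ :=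
    abundancy_map_surjective_general (fun ε => span_image_privateEdges_eq_top (hyp ε)) φ
  exact ⟨l, abundancyMap_apply _ d l⟩
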